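/- arXiv:2002.04771 — 13 statements merged into one kernel-verified Lean document; each statement's English description precedes it below -/
import Mathlib

section
/- A subset C of U is a copy for G if and only if for every finite subset F of C and every x ∈ U \ F there exists g in the pointwise stabilizer G⟨F⟩ with g(x) ∈ C. -/
/-- `f` is adherent to the subgroup `G` of permutations of `U`:
for every finite set `F` there is `g ∈ G` agreeing with `f` on `F`. -/
def IsAdherent {U : Type*} (G : Subgroup (Equiv.Perm U)) (f : U → U) : Prop :=
  ∀ F : Finset U, ∃ g ∈ G, ∀ x ∈ F, f x = g x

/-- `C` is a copy for the group `G`: the range of a function adherent to `G`. -/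
def IsCopy {U : Type*} (G : Subgroup (Equiv.Perm U)) (C : Set U) : Prop :=
  ∃ f : U → U, IsAdherent G f ∧ Set.range f = C

/-- Theorem (characterization of copies): `C` is a copy for `G` iff for every finite
`F ⊆ C` and every `x ∉ F` there is `g` in the pointwise stabilizer of `F` with `g x ∈ C`. -/
theorem copy_characterization {U : Type*} [Countable U] [Infinite U]
    (G : Subgroup (Equiv.Perm U)) (C : Set U) :
    IsCopy G C ↔
      ∀ F : Finset U, ↑F ⊆ C → ∀ x : U, x ∉ F →
        ∃ g ∈ G, (∀ a ∈ F, g a = a) ∧ g x ∈ C := by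
  classical
  constructor
  · rintro ⟨f, hf, rfl⟩ F hF x _
    choose! e he using (fun a (ha : a ∈ F) => hF ha : ∀ a, a ∈ F → ∃ y, f y = a)
    obtain ⟨h, hG, hh⟩ := hf (F.image e)
    obtain ⟨k, kG, hk⟩ := hf (insert (h⁻¹ x) (F.image e))
    refine ⟨k * h⁻¹, G.mul_mem kG (G.inv_mem hG), ?_, ?_⟩
    · intro a ha
      have hm : e a ∈ F.image e := Finset.mem_image_of_mem e ha
      have h1 : h (e a) = a := by rw [← hh _ hm, he a ha]
      have h2 : k (e a) = a := by rw [← hk _ (Finset.mem_insert_of_mem hm), he a ha]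
      have h3 : h⁻¹ a = e a := by rw [Equiv.Perm.inv_eq_iff_eq, h1]
      rw [Equiv.Perm.mul_apply, h3, h2]
    · exact ⟨h⁻¹ x, hk _ (Finset.mem_insert_self _ _)⟩
  · intro H
    let S := {p : Equiv.Perm U × Finset U // p.1 ∈ G ∧ ∀ x ∈ p.2, p.1 x ∈ C}
    have step : ∀ (s : S) (u : U), ∃ t : S, s.1.2 ⊆ t.1.2 ∧
        (∀ x ∈ s.1.2, t.1.1 x = s.1.1 x) ∧ u ∈ t.1.2 ∧
        (u ∈ C → ∃ e ∈ t.1.2, t.1.1 e = u) := by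
      rintro ⟨⟨g, E⟩, hg, hE⟩ u
      have forth : ∃ g' ∈ G, (∀ x ∈ E, g' x = g x) ∧ g' u ∈ C := by
        by_cases hu : u ∈ E
        · exact ⟨g, hg, fun _ _ => rfl, hE u hu⟩
        · obtain ⟨h, hG, h1, h2⟩ := H (E.image g)
            (by intro y hy; obtain ⟨x, hx, rfl⟩ := Finset.mem_image.1 (Finset.mem_coe.1 hy); exact hE x hx)
            (g u) (by simpa using hu)
          exact ⟨h * g, G.mul_mem hG hg,
            fun x hx => h1 _ (Finset.mem_image_of_mem g hx), h2⟩
      obtain ⟨g', hg', h1, h2⟩ := forth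
      have h3 : ∀ x ∈ insert u E, g' x ∈ C := by
        intro x hx
        rcases Finset.mem_insert.1 hx with rfl | hx
        · exact h2
        · rw [h1 x hx]; exact hE x hx
      by_cases hu : u ∈ C
      · refine ⟨⟨⟨g', insert (g'⁻¹ u) (insert u E)⟩, hg', ?_⟩, ?_, h1, ?_, ?_⟩
        · intro x hx
          rcases Finset.mem_insert.1 hx with rfl | hx
          · simpa using hu
          · exact h3 x hx
        · intro x hx; simp at hx ⊢; tauto
        · simp
        · intro _; exact ⟨g'⁻¹ u, by simp, by simp⟩
      · exact ⟨⟨⟨g', insert u E⟩, hg', h3⟩, Finset.subset_insert _ _, h1, by simp,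
          fun h => absurd h hu⟩
    choose t ht1 ht2 ht3 ht4 using step
    obtain ⟨u, hu⟩ := exists_surjective_nat U
    let s : ℕ → S := fun n => Nat.rec ⟨⟨1, ∅⟩, G.one_mem, by simp⟩ (fun n p => t p (u n)) n
    have hs : ∀ n, s (n + 1) = t (s n) (u n) := fun _ => rfl
    have mono : ∀ m n, m ≤ n → (s m).1.2 ⊆ (s n).1.2 ∧
        ∀ x ∈ (s m).1.2, (s n).1.1 x = (s m).1.1 x := by
      intro m n hmn
      induction n, hmn using Nat.le_induction with
      | base => exact ⟨subset_rfl, fun _ _ => rfl⟩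
      | succ n _ ih =>
        rw [hs]
        exact ⟨ih.1.trans (ht1 _ _), fun x hx => (ht2 _ _ x (ih.1 hx)).trans (ih.2 x hx)⟩
    choose k hk using hu
    have hmem : ∀ x, x ∈ (s (k x + 1)).1.2 := by
      intro x
      have := ht3 (s (k x)) (u (k x))
      rwa [← hs, hk] at this
    have agree : ∀ n x, x ∈ (s n).1.2 → (s (k x + 1)).1.1 x = (s n).1.1 x := by
      intro n x hx
      rcases le_total n (k x + 1) with h | h
      · exact (mono _ _ h).2 x hx
      · exact ((mono _ _ h).2 x (hmem x)).symm
    refine ⟨fun x => (s (k x + 1)).1.1 x, ?_, ?_⟩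
    · intro F
      refine ⟨(s (F.sup fun x => k x + 1)).1.1, (s _).2.1, fun x hx => ?_⟩
      exact agree _ x ((mono _ _ (Finset.le_sup (f := fun x => k x + 1) hx)).1 (hmem x))
    · ext c
      constructor
      · rintro ⟨x, rfl⟩
        exact (s (k x + 1)).2.2 x (hmem x)
      · intro hc
        obtain ⟨e, he, hec⟩ := ht4 (s (k c)) (u (k c)) (by rwa [hk])
        rw [← hs] at he hec
        rw [hk] at hec
        exact ⟨e, (agree (k c + 1) e he).trans hec⟩
end

section
/- The set cl(G)[U] of copies for G has cardinality either 1 or 2^ℵ₀ (the cardinality of the continuum). -/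
theorem IsAdherent.inj {U : Type*} {G : Subgroup (Equiv.Perm U)} {f : U → U}
    (hf : IsAdherent G f) : Function.Injective f := by
  classical
  intro x y hxy
  obtain ⟨g, -, hg⟩ := hf {x, y}
  have h1 := hg x (by simp)
  have h2 := hg y (by simp)
  exact g.injective (by rw [← h1, ← h2, hxy])

theorem IsAdherent.of_mem {U : Type*} {G : Subgroup (Equiv.Perm U)} {g : Equiv.Perm U}
    (hg : g ∈ G) : IsAdherent G g := fun _ => ⟨g, hg, fun _ _ => rfl⟩

theorem IsAdherent.comp {U : Type*} {G : Subgroup (Equiv.Perm U)} {f f' : U → U}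
    (hf : IsAdherent G f) (hf' : IsAdherent G f') : IsAdherent G (f ∘ f') := by
  classical
  intro F
  obtain ⟨g', hg', h'⟩ := hf' F
  obtain ⟨g, hg, h⟩ := hf (F.image f')
  refine ⟨g * g', G.mul_mem hg hg', fun x hx => ?_⟩
  rw [Function.comp_apply, h _ (Finset.mem_image_of_mem _ hx), h' x hx]
  rfl

open Classical in
/-- The fusion sequence along the branch `b`. -/
noncomputable def fusionSeq {U : Type*} (e : ℕ → U) (k : Finset U → U → U) (y : Finset U → U)
    (b : ℕ → Bool) : ℕ → (U → U) × Finset U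
  | 0 => (id, ∅)
  | n + 1 =>
    (if b n then (fusionSeq e k y b n).1
      else (fusionSeq e k y b n).1 ∘ k (fusionSeq e k y b n).2,
     insert (y (fusionSeq e k y b n).2) (insert (e n) (fusionSeq e k y b n).2))

section
variable {U : Type*} {e : ℕ → U} {k : Finset U → U → U} {y : Finset U → U}

theorem fusionSeq_adherent {G : Subgroup (Equiv.Perm U)} (hk : ∀ F, IsAdherent G (k F))
    (b : ℕ → Bool) (n : ℕ) : IsAdherent G (fusionSeq e k y b n).1 := by
  induction n with
  | zero => exact IsAdherent.of_mem G.one_mem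
  | succ n ih =>
    rw [fusionSeq]
    dsimp only
    split_ifs
    · exact ih
    · exact ih.comp (hk _)

theorem fusionSeq_mono (b : ℕ → Bool) : Monotone fun n => (fusionSeq e k y b n).2 := by
  apply monotone_nat_of_le_succ
  intro n x hx
  rw [fusionSeq]
  simp [hx]

theorem fusionSeq_range (b : ℕ → Bool) :
    Antitone fun n => Set.range (fusionSeq e k y b n).1 := by
  apply antitone_nat_of_succ_le
  intro n
  rw [fusionSeq]
  dsimp only
  split_ifs
  · exact le_rfl
  · exact Set.range_comp_subset_range _ _

theorem fusionSeq_stable (hk : ∀ F, ∀ x ∈ F, k F x = x) (b : ℕ → Bool) {n m : ℕ} (h : n ≤ m)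
    {x : U} (hx : x ∈ (fusionSeq e k y b n).2) :
    (fusionSeq e k y b m).1 x = (fusionSeq e k y b n).1 x := by
  induction m, h using Nat.le_induction with
  | base => rfl
  | succ m hm ih =>
    have hxm := fusionSeq_mono (e := e) (k := k) (y := y) b hm hx
    rw [← ih, fusionSeq]
    dsimp only
    split_ifs
    · rfl
    · rw [Function.comp_apply, hk _ _ hxm]

theorem fusionSeq_congr {b c : ℕ → Bool} (n : ℕ) (h : ∀ i < n, b i = c i) :
    fusionSeq e k y b n = fusionSeq e k y c n := by
  induction n with
  | zero => rfl
  | succ n ih =>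
    rw [fusionSeq, fusionSeq, ih fun i hi => h i (by omega), h n (by omega)]

theorem fusionSeq_limit {G : Subgroup (Equiv.Perm U)} (he : Function.Surjective e)
    (hk : ∀ F, IsAdherent G (k F)) (hfix : ∀ F, ∀ x ∈ F, k F x = x) (b : ℕ → Bool) :
    ∃ f : U → U, IsAdherent G f ∧
      (∀ n, ∀ x ∈ (fusionSeq e k y b n).2, f x = (fusionSeq e k y b n).1 x) ∧
      ∀ n, Set.range f ⊆ Set.range (fusionSeq e k y b n).1 := by
  have hmem : ∀ x, ∃ n, x ∈ (fusionSeq e k y b n).2 := by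
    intro x
    obtain ⟨n, rfl⟩ := he x
    refine ⟨n + 1, ?_⟩
    rw [fusionSeq]
    simp
  choose N hN using hmem
  have hlim : ∀ n, ∀ x ∈ (fusionSeq e k y b n).2,
      (fusionSeq e k y b (N x)).1 x = (fusionSeq e k y b n).1 x := by
    intro n x hx
    rcases le_total (N x) n with h | h
    · exact (fusionSeq_stable hfix b h (hN x)).symm
    · exact fusionSeq_stable hfix b h hx
  refine ⟨fun x => (fusionSeq e k y b (N x)).1 x, ?_, hlim, ?_⟩
  · intro A
    obtain ⟨g, hg, h⟩ := fusionSeq_adherent (e := e) (y := y) hk b (A.sup N) A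
    refine ⟨g, hg, fun x hx => ?_⟩
    rw [← h x hx]
    exact hlim _ x (fusionSeq_mono b (Finset.le_sup hx) (hN x))
  · rintro n _ ⟨x, rfl⟩
    have hx := fusionSeq_mono (e := e) (k := k) (y := y) b (le_max_left (N x) n) (hN x)
    dsimp only
    rw [hlim _ x hx]
    exact fusionSeq_range b (le_max_right (N x) n) ⟨x, rfl⟩

theorem fusion_ne {G : Subgroup (Equiv.Perm U)}
    (hk : ∀ F, IsAdherent G (k F)) (hy : ∀ F, y F ∉ Set.range (k F)) {b c : ℕ → Bool} {n : ℕ}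
    (h : ∀ i < n, b i = c i) (hb : b n = true) (hc : c n = false) {f f' : U → U}
    (hf : ∀ n, ∀ x ∈ (fusionSeq e k y b n).2, f x = (fusionSeq e k y b n).1 x)
    (hf' : ∀ n, Set.range f' ⊆ Set.range (fusionSeq e k y c n).1) :
    Set.range f ≠ Set.range f' := by
  intro heq
  have h1 : f (y (fusionSeq e k y b n).2)
      = (fusionSeq e k y b n).1 (y (fusionSeq e k y b n).2) := by
    rw [hf (n + 1) _ (by rw [fusionSeq]; simp), fusionSeq]
    simp [hb]
  have h2 := hf' (n + 1) (heq ▸ Set.mem_range_self (f := f) (y (fusionSeq e k y b n).2))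
  rw [h1, fusionSeq, ← fusionSeq_congr n h] at h2
  simp only [hc, Bool.false_eq_true, if_false] at h2
  obtain ⟨z, hz⟩ := h2
  exact hy _ ⟨z, (fusionSeq_adherent hk b n).inj hz⟩

end

/-- Theorem: the set of copies for `G` has cardinality `1` or the continuum. -/
theorem card_copies_one_or_continuum {U : Type*} [Countable U] [Infinite U]
    (G : Subgroup (Equiv.Perm U)) :
    Cardinal.mk {C : Set U // IsCopy G C} = 1 ∨
      Cardinal.mk {C : Set U // IsCopy G C} = Cardinal.continuum := by
  classical
  by_cases hall : ∀ f : U → U, IsAdherent G f → Function.Surjective f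
  · left
    rw [Cardinal.eq_one_iff_unique]
    refine ⟨⟨?_⟩, ⟨⟨Set.range (1 : Equiv.Perm U), _, IsAdherent.of_mem G.one_mem, rfl⟩⟩⟩
    rintro ⟨_, f, hf, rfl⟩ ⟨_, f', hf', rfl⟩
    simp only [(hall f hf).range_eq, (hall f' hf').range_eq]
  right
  have hU : Cardinal.mk U = Cardinal.aleph0 := Cardinal.mk_eq_aleph0 U
  apply le_antisymm
  · calc Cardinal.mk {C : Set U // IsCopy G C} ≤ Cardinal.mk (Set U) := Cardinal.mk_subtype_le _
      _ = Cardinal.continuum := by rw [Cardinal.mk_set, hU, Cardinal.two_power_aleph0]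
  push Not at hall
  obtain ⟨f, hf, hns⟩ := hall
  have key : ∀ F : Finset U, ∃ (k : U → U) (y : U), IsAdherent G k ∧ (∀ x ∈ F, k x = x) ∧
      y ∉ Set.range k := by
    intro F
    obtain ⟨y, hy⟩ := not_forall.mp hns
    obtain ⟨g, hg, h⟩ := hf F
    refine ⟨⇑(g⁻¹) ∘ f, g⁻¹ y, (IsAdherent.of_mem (G.inv_mem hg)).comp hf, ?_, ?_⟩
    · intro x hx
      rw [Function.comp_apply, h x hx]
      exact g.symm_apply_apply x
    · rintro ⟨z, hz⟩
      exact hy ⟨z, (g⁻¹).injective hz⟩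
  choose k y hk hfix hy using key
  obtain ⟨e, he⟩ := exists_surjective_nat U
  choose L hL hL1 hL2 using fusionSeq_limit (y := y) he hk hfix
  have hinj : Function.Injective fun b : ℕ → Bool =>
      (⟨Set.range (L b), L b, hL b, rfl⟩ : {C : Set U // IsCopy G C}) := by
    intro b c hbc
    have hbc' : Set.range (L b) = Set.range (L c) := congrArg Subtype.val hbc
    by_contra hne
    have hex : ∃ n, b n ≠ c n := Function.ne_iff.mp hne
    have hlt : ∀ i < Nat.find hex, b i = c i := fun i hi => not_not.mp (Nat.find_min hex hi)
    have hsp := Nat.find_spec hex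
    rcases hb : b (Nat.find hex) with _ | _
    · have hc : c (Nat.find hex) = true := by
        rw [hb] at hsp
        simpa using hsp.symm
      exact fusion_ne hk hy (fun i hi => (hlt i hi).symm) hc hb (hL1 c) (hL2 b) hbc'.symm
    · have hc : c (Nat.find hex) = false := by
        rw [hb] at hsp
        simpa using hsp.symm
      exact fusion_ne hk hy hlt hb hc (hL1 b) (hL2 c) hbc'
  have := Cardinal.mk_le_of_injective (α := ULift (ℕ → Bool)) (hinj.comp ULift.down_injective)
  simpa using this
end

section
/- If G is oligomorphic then there exists an order embedding of the power set of ℕ ordered by inclusion into the set cl(G)[U] of copies for G ordered by inclusion. -/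
/-- `G` is oligomorphic: for every `n ≥ 1` the coordinatewise action of `G`
on `U^n` has finitely many orbits. -/
def Oligomorphic {U : Type*} (G : Subgroup (Equiv.Perm U)) : Prop :=
  ∀ n : ℕ, 0 < n →
    {O : Set (Fin n → U) |
      ∃ x : Fin n → U, O = {y | ∃ g ∈ G, ∀ i, g (x i) = y i}}.Finite

open Classical in
/-- finite sets of sequences closed under updates -/
lemma aux_box {U : Type*} [Infinite U] (M : Finset U) (hM : M.Nonempty) (N : Finset ℕ) :
    ∃ P : Finset (ℕ → U), P.Nonempty ∧
      ∀ w ∈ P, ∀ i ∈ N, ∀ u ∈ M, Function.update w i u ∈ P := by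
  induction N using Finset.induction_on with
  | empty => exact ⟨{fun _ => hM.choose}, by simp, by simp⟩
  | insert i N hi ih =>
    obtain ⟨P, hP, hc⟩ := ih
    refine ⟨Finset.image₂ (fun w u => Function.update w i u) P M, hP.image₂ hM, ?_⟩
    intro w hw j hj v hv
    rw [Finset.mem_image₂] at hw
    obtain ⟨w', hw', u, hu, rfl⟩ := hw
    rw [Finset.mem_image₂]
    by_cases hji : j = i
    · subst hji
      exact ⟨w', hw', v, hv, by simp⟩
    · have hjN : j ∈ N := by simpa [hji] using hj
      refine ⟨Function.update w' j v, hc _ hw' _ hjN _ hv, u, hu, ?_⟩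
      exact Function.update_comm hji _ _ _

open Classical in
lemma aux_avoid {U : Type*} [Infinite U] (L : Finset (ℕ × ((ℕ → U) → U)))
    (hL : ∀ p ∈ L, ∀ w u, p.2 (Function.update w p.1 u) = p.2 w) :
    ∃ w : ℕ → U, ∀ p ∈ L, p.2 w ≠ w p.1 := by
  obtain ⟨M, hM⟩ := Infinite.exists_subset_card_eq U (L.card + 1)
  have hMne : M.Nonempty := by rw [← Finset.card_pos]; omega
  obtain ⟨P, hP, hc⟩ := aux_box M hMne (L.image Prod.fst)
  by_contra hcon
  push Not at hcon
  have h1 : ∀ p ∈ L, (P.filter (fun w => p.2 w = w p.1)).card * M.card ≤ P.card := by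
    intro p hp
    rw [← Finset.card_product]
    refine Finset.card_le_card_of_injOn (fun q => Function.update q.1 p.1 q.2) ?_ ?_
    · intro q hq
      simp only [Finset.coe_product, Set.mem_prod, Finset.mem_coe, Finset.mem_filter] at hq
      exact hc _ hq.1.1 _ (Finset.mem_image_of_mem _ hp) _ hq.2
    · rintro ⟨w, u⟩ hq ⟨w', u'⟩ hq' heq
      simp only [Finset.coe_product, Set.mem_prod, Finset.mem_coe, Finset.mem_filter] at hq hq'
      simp only at heq
      have hu : u = u' := by simpa using congrFun heq p.1
      have ht : p.2 w = p.2 w' := by rw [← hL p hp w u, heq, hL p hp w' u']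
      have hw : w = w' := by
        funext j
        by_cases hj : j = p.1
        · subst hj; rw [← hq.1.2, ht, hq'.1.2]
        · simpa [hj] using congrFun heq j
      rw [hu, hw]
  have h2 : P ⊆ L.biUnion (fun p => P.filter (fun w => p.2 w = w p.1)) := by
    intro w hw
    obtain ⟨p, hp, h⟩ := hcon w
    exact Finset.mem_biUnion.2 ⟨p, hp, Finset.mem_filter.2 ⟨hw, h⟩⟩
  have h3 := (Finset.card_le_card h2).trans Finset.card_biUnion_le
  have h4 : P.card * M.card ≤ L.card * P.card := by
    calc P.card * M.card ≤ (∑ p ∈ L, (P.filter (fun w => p.2 w = w p.1)).card) * M.card :=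
          Nat.mul_le_mul_right _ h3
      _ = ∑ p ∈ L, (P.filter (fun w => p.2 w = w p.1)).card * M.card := Finset.sum_mul _ _ _
      _ ≤ ∑ p ∈ L, P.card := Finset.sum_le_sum h1
      _ = L.card * P.card := by simp
  have h5 := hP.card_pos
  rw [hM] at h4
  nlinarith

lemma aux_ultra (U : Type*) [Infinite U] : ∃ W : Ultrafilter (ℕ → U),
    ∀ (n : ℕ) (t : (ℕ → U) → U), (∀ w u, t (Function.update w n u) = t w) →
      ∀ᶠ w in (W : Filter (ℕ → U)), t w ≠ w n := by
  classical
  let good : Set (ℕ × ((ℕ → U) → U)) := {p | ∀ w u, p.2 (Function.update w p.1 u) = p.2 w}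
  let Φ : ℕ × ((ℕ → U) → U) → Set (ℕ → U) := fun p => {w | p.2 w ≠ w p.1}
  have hne : (Filter.generate (Φ '' good)).NeBot := by
    rw [Filter.generate_neBot_iff]
    intro S hS hfin
    obtain ⟨T, hT, hTf, rfl⟩ := Set.exists_subset_image_finite_and.1 ⟨S, hS, hfin, rfl⟩
    lift T to Finset (ℕ × ((ℕ → U) → U)) using hTf
    rename' T => L, hT => hL
    obtain ⟨w, hw⟩ := aux_avoid L (fun p hp => hL hp)
    refine ⟨w, ?_⟩
    rintro _ ⟨p, hp, rfl⟩
    exact hw p hp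
  refine ⟨Ultrafilter.of (Filter.generate (Φ '' good)), fun n t ht => ?_⟩
  apply Ultrafilter.of_le
  exact Filter.mem_generate_of_mem ⟨(n, t), ht, rfl⟩

/-- homogeneous set for finitely many functions -/
lemma aux_homog {U Ω : Type*} (G : Subgroup (Equiv.Perm U)) (h : Oligomorphic G)
    (W : Ultrafilter Ω) (l : List (Ω → U)) :
    ∃ S ∈ W, ∀ w ∈ S, ∀ w' ∈ S, ∃ g ∈ G, ∀ e ∈ l, g (e w) = e w' := by
  rcases Nat.eq_zero_or_pos l.length with h0 | h0
  · rw [List.length_eq_zero_iff] at h0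
    subst h0
    exact ⟨Set.univ, Filter.univ_mem, fun _ _ _ _ => ⟨1, G.one_mem, by simp⟩⟩
  have hf := h l.length h0
  let orb : Ω → Set (Fin l.length → U) := fun w => {y | ∃ g ∈ G, ∀ i, g (l.get i w) = y i}
  have hmem : {O : Set (Fin l.length → U) |
      ∃ x : Fin l.length → U, O = {y | ∃ g ∈ G, ∀ i, g (x i) = y i}} ∈ W.map orb := by
    rw [Ultrafilter.mem_map]
    exact Filter.Eventually.of_forall (f := (W : Filter Ω)) fun w => ⟨fun i => l.get i w, rfl⟩
  obtain ⟨O, -, hO⟩ := Ultrafilter.eq_pure_of_finite_mem hf hmem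
  have hS : orb ⁻¹' {O} ∈ W := by
    rw [← Ultrafilter.mem_map, hO]; exact rfl
  refine ⟨_, hS, fun w hw w' hw' => ?_⟩
  have h1 : (fun i => l.get i w') ∈ orb w' := ⟨1, G.one_mem, by simp⟩
  have h2 : orb w = orb w' := Eq.trans hw (Eq.symm hw')
  rw [← h2] at h1
  obtain ⟨g, hg, hgi⟩ := h1
  refine ⟨g, hg, fun e he => ?_⟩
  obtain ⟨i, rfl⟩ := List.get_of_mem he
  exact hgi i

/-- finite partial isomorphism, almost everywhere -/
def auxGood {U Ω : Type*} (G : Subgroup (Equiv.Perm U)) (W : Ultrafilter Ω)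
    (s : Finset (U × (Ω → U))) : Prop :=
  ∀ᶠ w in (W : Filter Ω), ∃ g ∈ G, ∀ p ∈ s, g p.1 = p.2 w

open Classical in
lemma aux_back {U Ω : Type*} (G : Subgroup (Equiv.Perm U)) (h : Oligomorphic G)
    (W : Ultrafilter Ω) (s : Finset (U × (Ω → U))) (hs : auxGood G W s) (e : Ω → U) :
    ∃ x : U, auxGood G W (insert (x, e) s) := by
  obtain ⟨S, hS, hh⟩ := aux_homog G h W (e :: s.toList.map Prod.snd)
  have hS' : ∀ᶠ w in (W : Filter Ω), w ∈ S := hS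
  obtain ⟨w0, ⟨g0, hg0, h0⟩, hw0⟩ := (hs.and hS').exists
  refine ⟨g0⁻¹ (e w0), ?_⟩
  filter_upwards [hS'] with w hw
  obtain ⟨g, hg, hge⟩ := hh w0 hw0 w hw
  refine ⟨g * g0, G.mul_mem hg hg0, ?_⟩
  intro p hp
  rw [Finset.mem_insert] at hp
  rcases hp with rfl | hp
  · simpa using hge e (by simp)
  · have := hge p.2 (by
      refine List.mem_cons_of_mem _ (List.mem_map.2 ⟨p, by simpa using hp, rfl⟩))
    rw [Equiv.Perm.mul_apply, h0 p hp, this]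

open Classical in
/-- Skolem functions -/
noncomputable def auxSk {U : Type*} (G : Subgroup (Equiv.Perm U)) (xs : List U) (x : U)
    (us : List U) : U :=
  if hh : ∃ g ∈ G, xs.map (fun y => g y) = us then hh.choose x else x

lemma auxSk_spec {U : Type*} (G : Subgroup (Equiv.Perm U)) (xs : List U) (x : U)
    (us : List U) (hh : ∃ g ∈ G, xs.map (fun y => g y) = us) :
    ∃ g ∈ G, xs.map (fun y => g y) = us ∧ g x = auxSk G xs x us := by
  refine ⟨hh.choose, hh.choose_spec.1, hh.choose_spec.2, ?_⟩
  simp [auxSk, dif_pos hh]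

/-- closedness under Skolem functions -/
def auxClosed {U Ω : Type*} (G : Subgroup (Equiv.Perm U)) (D : Set (Ω → U)) : Prop :=
  ∀ (xs : List U) (x : U) (es : List (Ω → U)), (∀ e ∈ es, e ∈ D) →
    (fun w => auxSk G xs x (es.map (fun e => e w))) ∈ D

open Classical in
lemma aux_forth {U Ω : Type*} (G : Subgroup (Equiv.Perm U))
    (W : Ultrafilter Ω) (D : Set (Ω → U)) (hD : auxClosed G D)
    (s : Finset (U × (Ω → U))) (hs : auxGood G W s) (hsD : ∀ p ∈ s, p.2 ∈ D) (x : U) :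
    ∃ e ∈ D, auxGood G W (insert (x, e) s) := by
  refine ⟨_, hD (s.toList.map Prod.fst) x (s.toList.map Prod.snd) ?_, ?_⟩
  · intro e he
    obtain ⟨p, hp, rfl⟩ := List.mem_map.1 he
    exact hsD p (by simpa using hp)
  · filter_upwards [hs] with w hw
    obtain ⟨g, hg, hgs⟩ := hw
    obtain ⟨g', hg', h1, h2⟩ := auxSk_spec G (s.toList.map Prod.fst) x
      ((s.toList.map Prod.snd).map (fun e => e w)) ⟨g, hg, by
        simp only [List.map_map]
        refine List.map_congr_left fun p hp => ?_
        exact hgs p (by simpa using hp)⟩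
    refine ⟨g', hg', fun p hp => ?_⟩
    rw [Finset.mem_insert] at hp
    rcases hp with rfl | hp
    · exact h2
    · simp only [List.map_map] at h1
      exact List.map_inj_left.1 h1 p (by simpa using hp)

open Classical in
lemma aux_iso {U Ω : Type*} [Countable U] (G : Subgroup (Equiv.Perm U)) (h : Oligomorphic G)
    (W : Ultrafilter Ω) (D : Set (Ω → U)) (hD : auxClosed G D) (hc : D.Countable) :
    ∃ f : U → (Ω → U), (∀ x, f x ∈ D) ∧
      (∀ F : Finset U, ∀ᶠ w in (W : Filter Ω), ∃ g ∈ G, ∀ x ∈ F, g x = f x w) ∧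
      (∀ e ∈ D, ∃ x, ∀ᶠ w in (W : Filter Ω), f x w = e w) := by
  let P := {s : Finset (U × (Ω → U)) // auxGood G W s ∧ ∀ p ∈ s, p.2 ∈ D}
  have : Countable D := hc
  have : Encodable (U ⊕ D) := Encodable.ofCountable _
  let cof : U ⊕ D → Order.Cofinal P := fun i =>
    match i with
    | Sum.inl x =>
      { carrier := {s | ∃ e, (x, e) ∈ s.1}
        isCofinal := by
          rintro ⟨s, hs, hsD⟩
          obtain ⟨e, he, hg⟩ := aux_forth G W D hD s hs hsD x
          refine ⟨⟨insert (x, e) s, hg, ?_⟩, ⟨e, Finset.mem_insert_self _ _⟩,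
            Finset.subset_insert _ _⟩
          intro p hp
          rcases Finset.mem_insert.1 hp with rfl | hp
          · exact he
          · exact hsD p hp }
    | Sum.inr e =>
      { carrier := {s | ∃ x, (x, e.1) ∈ s.1}
        isCofinal := by
          rintro ⟨s, hs, hsD⟩
          obtain ⟨x, hg⟩ := aux_back G h W s hs e.1
          refine ⟨⟨insert (x, e.1) s, hg, ?_⟩, ⟨x, Finset.mem_insert_self _ _⟩,
            Finset.subset_insert _ _⟩
          intro p hp
          rcases Finset.mem_insert.1 hp with rfl | hp
          · exact e.2
          · exact hsD p hp }
  let p0 : P := ⟨∅, Filter.Eventually.of_forall fun _ => ⟨1, G.one_mem, by simp⟩, by simp⟩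
  let I := Order.idealOfCofinals p0 cof
  have hx : ∀ x : U, ∃ e, ∃ s ∈ I, (x, e) ∈ s.1 := by
    intro x
    obtain ⟨s, ⟨e, he⟩, hs⟩ := Order.cofinal_meets_idealOfCofinals p0 cof (Sum.inl x)
    exact ⟨e, s, hs, he⟩
  choose f sf hsf hf using hx
  have hdir : ∀ s ∈ I, ∀ F : Finset U, ∃ s' ∈ I, s ≤ s' ∧ ∀ x ∈ F, (x, f x) ∈ s'.1 := by
    intro s hs F
    induction F using Finset.induction_on with
    | empty => exact ⟨s, hs, le_rfl, by simp⟩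
    | insert a F ha ih =>
      obtain ⟨s1, h1, h1s, h1F⟩ := ih
      obtain ⟨s2, h2, h12, ha2⟩ := I.directed s1 h1 (sf a) (hsf a)
      refine ⟨s2, h2, h1s.trans h12, ?_⟩
      intro x hxF
      rcases Finset.mem_insert.1 hxF with rfl | hxF
      · exact ha2 (hf _)
      · exact h12 (h1F x hxF)
  refine ⟨f, fun x => (sf x).2.2 _ (hf x), ?_, ?_⟩
  · intro F
    obtain ⟨s, -, -, hs⟩ := hdir p0 (Order.mem_idealOfCofinals p0 cof) F
    filter_upwards [s.2.1] with w hw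
    obtain ⟨g, hg, hgs⟩ := hw
    exact ⟨g, hg, fun x hx => hgs _ (hs x hx)⟩
  · intro e he
    obtain ⟨s, ⟨x, hx⟩, hs⟩ := Order.cofinal_meets_idealOfCofinals p0 cof (Sum.inr ⟨e, he⟩)
    obtain ⟨s', -, hss, hs'⟩ := hdir s hs {x}
    refine ⟨x, ?_⟩
    filter_upwards [s'.2.1] with w hw
    obtain ⟨g, hg, hgs⟩ := hw
    exact (hgs _ (hs' x (by simp))).symm.trans (hgs _ (hss hx))

/-- stages of the Skolem hull of the coordinates in `A` -/
def auxStage {U : Type*} (G : Subgroup (Equiv.Perm U)) (A : Set ℕ) : ℕ → Set ((ℕ → U) → U)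
  | 0 => (fun n w => w n) '' A
  | k + 1 => auxStage G A k ∪ Set.range
      (fun q : List U × U × List (auxStage G A k) =>
        fun w => auxSk G q.1 q.2.1 ((q.2.2.map Subtype.val).map (fun e => e w)))

/-- Skolem hull of the coordinates in `A` -/
def auxHull {U : Type*} (G : Subgroup (Equiv.Perm U)) (A : Set ℕ) : Set ((ℕ → U) → U) :=
  ⋃ k, auxStage G A k

lemma auxStage_mono {U : Type*} (G : Subgroup (Equiv.Perm U)) (A : Set ℕ) :
    Monotone (auxStage G A) :=
  monotone_nat_of_le_succ fun k => by
    rw [auxStage]; exact Set.subset_union_left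

lemma auxHull_countable {U : Type*} [Countable U] (G : Subgroup (Equiv.Perm U)) (A : Set ℕ) :
    (auxHull G A).Countable := by
  refine Set.countable_iUnion fun k => ?_
  induction k with
  | zero => exact (Set.to_countable A).image _
  | succ k ih =>
    have : Countable (auxStage G A k) := ih
    rw [auxStage]
    exact ih.union (Set.countable_range _)

lemma auxHull_closed {U : Type*} (G : Subgroup (Equiv.Perm U)) (A : Set ℕ) :
    auxClosed G (auxHull G A) := by
  intro xs x es hes
  have : ∃ k, ∀ e ∈ es, e ∈ auxStage G A k := by
    induction es with
    | nil => exact ⟨0, by simp⟩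
    | cons a es ih =>
      obtain ⟨k, hk⟩ := ih fun e he => hes e (List.mem_cons_of_mem _ he)
      obtain ⟨m, hm⟩ := Set.mem_iUnion.1 (hes a List.mem_cons_self)
      refine ⟨max k m, fun e he => ?_⟩
      rcases List.mem_cons.1 he with rfl | he
      · exact auxStage_mono G A (le_max_right _ _) hm
      · exact auxStage_mono G A (le_max_left _ _) (hk e he)
  obtain ⟨k, hk⟩ := this
  refine Set.mem_iUnion.2 ⟨k + 1, ?_⟩
  rw [auxStage]
  right
  lift es to List (auxStage G A k) using hk
  exact ⟨(xs, x, es), rfl⟩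

lemma auxHull_coord {U : Type*} (G : Subgroup (Equiv.Perm U)) (A : Set ℕ) (n : ℕ) (hn : n ∈ A) :
    (fun w : ℕ → U => w n) ∈ auxHull G A :=
  Set.mem_iUnion.2 ⟨0, n, hn, rfl⟩

lemma auxHull_sub {U : Type*} (G : Subgroup (Equiv.Perm U)) {A : Set ℕ} {D : Set ((ℕ → U) → U)}
    (hD : auxClosed G D) (hA : ∀ n ∈ A, (fun w : ℕ → U => w n) ∈ D) : auxHull G A ⊆ D := by
  refine Set.iUnion_subset fun k => ?_
  induction k with
  | zero => rintro _ ⟨n, hn, rfl⟩; exact hA n hn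
  | succ k ih =>
    rw [auxStage]
    refine Set.union_subset ih ?_
    rintro _ ⟨⟨xs, x, es⟩, rfl⟩
    refine hD xs x _ fun e he => ?_
    obtain ⟨e', -, rfl⟩ := List.mem_map.1 he
    exact ih e'.2

lemma auxHull_indep {U : Type*} (G : Subgroup (Equiv.Perm U)) {A : Set ℕ} {n : ℕ} (hn : n ∉ A) :
    auxHull G A ⊆ {t | ∀ w u, t (Function.update w n u) = t w} := by
  refine auxHull_sub G ?_ ?_
  · intro xs x es hes w u
    have : es.map (fun e => e (Function.update w n u)) = es.map (fun e => e w) :=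
      List.map_congr_left fun e he => hes e he w u
    simp only [this]
  · intro m hm w u
    have : m ≠ n := fun h => hn (h ▸ hm)
    simp [this]

/-- Theorem: if `G` is oligomorphic then the powerset of `ℕ`, ordered by inclusion,
order-embeds into the poset of copies for `G`, ordered by inclusion. -/
theorem powerset_embeds_of_oligomorphic {U : Type*} [Countable U] [Infinite U]
    (G : Subgroup (Equiv.Perm U)) (h : Oligomorphic G) :
    Nonempty (Set ℕ ↪o {C : Set U // IsCopy G C}) := by
  classical
  obtain ⟨W, hW⟩ := aux_ultra U
  obtain ⟨φ, hφD, hφ, hφs⟩ := aux_iso G h W (auxHull G Set.univ) (auxHull_closed G _)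
    (auxHull_countable G _)
  have hmono : ∀ {A B : Set ℕ}, A ⊆ B → auxHull G A ⊆ auxHull G B := fun {A B} hAB =>
    auxHull_sub G (auxHull_closed G B) fun n hn => auxHull_coord G B n (hAB hn)
  let C : Set ℕ → Set U := fun A =>
    {y | ∃ t ∈ auxHull G A, ∀ᶠ w in (W : Filter (ℕ → U)), φ y w = t w}
  have hinj : ∀ y y', (∀ᶠ w in (W : Filter (ℕ → U)), φ y w = φ y' w) → y = y' := by
    intro y y' hyy
    obtain ⟨w, h1, g, hg, h2⟩ := (hyy.and (hφ {y, y'})).exists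
    apply g.injective
    rw [h2 y (by simp), h2 y' (by simp), h1]
  have hcopy : ∀ A, IsCopy G (C A) := by
    intro A
    obtain ⟨f, hfD, hf, hfs⟩ := aux_iso G h W (auxHull G A) (auxHull_closed G _)
      (auxHull_countable G _)
    choose k hk using fun x => hφs (f x) (hmono (Set.subset_univ A) (hfD x))
    refine ⟨k, ?_, ?_⟩
    · intro F
      have hall : ∀ᶠ w in (W : Filter (ℕ → U)), ∀ x ∈ F, φ (k x) w = f x w :=
        (Filter.eventually_all_finset F).2 fun x _ => hk x
      obtain ⟨w, h1, ⟨g, hg, h2⟩, g', hg', h3⟩ := (hall.and ((hf F).and (hφ (F.image k)))).exists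
      refine ⟨g'⁻¹ * g, G.mul_mem (G.inv_mem hg') hg, fun x hx => ?_⟩
      rw [Equiv.Perm.mul_apply, h2 x hx, ← h1 x hx, ← h3 _ (Finset.mem_image_of_mem k hx)]
      simp
    · ext y
      constructor
      · rintro ⟨x, rfl⟩
        exact ⟨f x, hfD x, hk x⟩
      · rintro ⟨t, ht, hyt⟩
        obtain ⟨x, hx⟩ := hfs t ht
        refine ⟨x, hinj _ _ ?_⟩
        filter_upwards [hk x, hx, hyt] with w h1 h2 h3
        rw [h1, h2, h3]
  refine ⟨OrderEmbedding.ofMapLEIff (fun A => ⟨C A, hcopy A⟩) ?_⟩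
  intro A B
  constructor
  · intro hAB n hn
    by_contra hnB
    obtain ⟨y, hy⟩ := hφs _ (auxHull_coord G Set.univ n trivial)
    have hyA : y ∈ C A := ⟨_, auxHull_coord G A n hn, hy⟩
    obtain ⟨t, ht, hyt⟩ := (show C A ⊆ C B from hAB) hyA
    obtain ⟨w, h1, h2, h3⟩ := ((hW n t (auxHull_indep G hnB ht)).and (hy.and hyt)).exists
    exact h1 (h3.symm.trans h2)
  · rintro hAB y ⟨t, ht, hyt⟩
    exact ⟨t, hmono hAB ht, hyt⟩
end

section
/- If G is algebraically finite then for every finite subset F of U there exist two copies C and D for G with C ∩ D = ac(F). -/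
/-- The algebraic closure of `F`: the union of all finite orbits of the pointwise
stabilizer of `F`, i.e. the set of points whose orbit under that stabilizer is finite. -/
def algCl {U : Type*} (G : Subgroup (Equiv.Perm U)) (F : Set U) : Set U :=
  {x | Set.Finite {y | ∃ g ∈ G, (∀ a ∈ F, g a = a) ∧ g x = y}}

/-- `G` is algebraically finite: the algebraic closure of every finite set is finite. -/
def AlgebraicallyFinite {U : Type*} (G : Subgroup (Equiv.Perm U)) : Prop :=
  ∀ F : Finset U, (algCl G ↑F).Finite

open Pointwise in
/-- Neumann's lemma: finitely many points with infinite orbits can be moved off a finite set. -/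
theorem neumann_move {H U : Type*} [Group H] [MulAction H U] (X Y : Finset U)
    (hX : ∀ x ∈ X, (MulAction.orbit H x).Infinite) : ∃ h : H, ∀ x ∈ X, h • x ∉ Y := by
  classical
  by_contra! hcon
  let g : U × U → H := fun i => if hi : ∃ h : H, h • i.1 = i.2 then hi.choose else 1
  have hg : ∀ (h : H) (x : U), g (x, h • x) • x = h • x := by
    intro h x
    have hi : ∃ k : H, k • (x, h • x).1 = (x, h • x).2 := ⟨h, rfl⟩
    have := hi.choose_spec
    simp only [g]
    rw [dif_pos hi]
    exact this
  have hcov : ⋃ i ∈ X ×ˢ Y, g i • (MulAction.stabilizer H i.1 : Set H) = Set.univ := by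
    rw [Set.eq_univ_iff_forall]
    intro h
    obtain ⟨x, hx, hy⟩ := hcon h
    simp only [Set.mem_iUnion]
    refine ⟨(x, h • x), by simp [hx, hy], ?_⟩
    rw [mem_leftCoset_iff]
    simp only [SetLike.mem_coe, MulAction.mem_stabilizer_iff]
    rw [mul_smul, inv_smul_eq_iff, hg]
  obtain ⟨k, hk, hfin⟩ := Subgroup.exists_finiteIndex_of_leftCoset_cover hcov
  have hk1 : k.1 ∈ X := (Finset.mem_product.1 hk).1
  have : Finite (MulAction.orbit H k.1) :=
    Finite.of_equiv _ (MulAction.orbitEquivQuotientStabilizer H k.1).symm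
  exact hX _ hk1 (Set.toFinite _)

/-- The pointwise stabilizer, inside `G`. -/
def ptStab {U : Type*} (G : Subgroup (Equiv.Perm U)) (E : Set U) : Subgroup (Equiv.Perm U) where
  carrier := {g | g ∈ G ∧ ∀ a ∈ E, g a = a}
  one_mem' := ⟨G.one_mem, fun _ _ => rfl⟩
  mul_mem' := by
    rintro a b ⟨ha, ha'⟩ ⟨hb, hb'⟩
    exact ⟨G.mul_mem ha hb, fun x hx => by rw [Equiv.Perm.mul_apply, hb' x hx, ha' x hx]⟩
  inv_mem' := by
    rintro a ⟨ha, ha'⟩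
    exact ⟨G.inv_mem ha, fun x hx => by rw [Equiv.Perm.inv_eq_iff_eq, ha' x hx]⟩

theorem move_off {U : Type*} (G : Subgroup (Equiv.Perm U)) (E : Set U) (X Y : Finset U)
    (hX : ∀ x ∈ X, x ∉ algCl G E) :
    ∃ h ∈ G, (∀ a ∈ E, h a = a) ∧ ∀ x ∈ X, h x ∉ Y := by
  obtain ⟨h, hh⟩ := neumann_move (H := ptStab G E) X Y (by
    intro x hx hfin
    apply hX x hx
    refine hfin.subset ?_
    rintro y ⟨g, hg, hgE, rfl⟩
    exact ⟨⟨g, hg, hgE⟩, rfl⟩)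
  exact ⟨h.1, h.2.1, h.2.2, hh⟩

theorem subset_algCl {U : Type*} (G : Subgroup (Equiv.Perm U)) (E : Set U) : E ⊆ algCl G E := by
  intro x hx
  refine (Set.finite_singleton x).subset ?_
  rintro y ⟨g, _, hgE, rfl⟩
  exact hgE x hx

theorem algCl_map {U : Type*} (G : Subgroup (Equiv.Perm U)) (E : Set U) {h : Equiv.Perm U}
    (hh : h ∈ G) (hE : ∀ a ∈ E, h a = a) {x : U} (hx : x ∈ algCl G E) : h x ∈ algCl G E := by
  refine Set.Finite.subset hx ?_
  rintro y ⟨g, hg, hgE, rfl⟩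
  exact ⟨g * h, G.mul_mem hg hh, fun a ha => by rw [Equiv.Perm.mul_apply, hE a ha, hgE a ha], rfl⟩

theorem algCl_idem {U : Type*} (G : Subgroup (Equiv.Perm U)) (E : Set U)
    (hfin : (algCl G E).Finite) : algCl G (algCl G E) = algCl G E := by
  classical
  refine Set.Subset.antisymm ?_ (subset_algCl _ _)
  intro x hx
  have : Finite (algCl G E) := hfin
  let P : (algCl G E → algCl G E) → Equiv.Perm U → Prop :=
    fun r h => h ∈ G ∧ (∀ a ∈ E, h a = a) ∧ ∀ a : algCl G E, h a = r a
  let c : (algCl G E → algCl G E) → Equiv.Perm U :=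
    fun r => if hr : ∃ h, P r h then hr.choose else 1
  have hc : ∀ r h, P r h → P r (c r) := by
    intro r h hP
    have hr : ∃ h, P r h := ⟨h, hP⟩
    have := hr.choose_spec
    simp only [c]
    rw [dif_pos hr]
    exact this
  refine (Set.finite_iUnion (fun r => Set.Finite.image (c r) hx)).subset ?_
  rintro y ⟨h, hh, hE, rfl⟩
  let r : algCl G E → algCl G E := fun a => ⟨h a, algCl_map G E hh hE a.2⟩
  obtain ⟨h1, h2, h3⟩ := hc r h ⟨hh, hE, fun a => rfl⟩
  refine Set.mem_iUnion.2 ⟨r, (c r)⁻¹ (h x), ⟨(c r)⁻¹ * h, G.mul_mem (G.inv_mem h1) hh, ?_, rfl⟩, ?_⟩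
  · intro a ha
    rw [Equiv.Perm.mul_apply, Equiv.Perm.inv_eq_iff_eq]
    exact (h3 ⟨a, ha⟩).symm
  · simp

/-- A stage of the construction. -/
structure Stage {U : Type*} (G : Subgroup (Equiv.Perm U)) (A : Set U) where
  E : Finset U
  p : Equiv.Perm U
  q : Equiv.Perm U
  closed : algCl G (E : Set U) = E
  sub : A ⊆ E
  hp : p ∈ G
  hq : q ∈ G
  pA : ∀ a ∈ A, p a = a
  qA : ∀ a ∈ A, q a = a
  disj : ∀ x ∈ E, ∀ y ∈ E, p x = q y → p x ∈ A

theorem Stage.step {U : Type*} {G : Subgroup (Equiv.Perm U)} (hG : AlgebraicallyFinite G)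
    {A : Set U} (s : Stage G A) (u : U) :
    ∃ t : Stage G A, s.E ⊆ t.E ∧ u ∈ t.E ∧ (∀ x ∈ s.E, t.p x = s.p x) ∧
      ∀ x ∈ s.E, t.q x = s.q x := by
  classical
  have hfin := hG (insert u s.E)
  let E' := hfin.toFinset
  have hE' : (E' : Set U) = algCl G ((insert u s.E : Finset U) : Set U) := hfin.coe_toFinset
  have hsub : ∀ x, x ∈ insert u s.E → x ∈ E' := by
    intro x hx
    exact hfin.mem_toFinset.2 (subset_algCl _ _ hx)
  have hnew : ∀ x ∈ E' \ s.E, x ∉ algCl G (s.E : Set U) := by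
    intro x hx
    rw [s.closed]
    exact_mod_cast (Finset.mem_sdiff.1 hx).2
  obtain ⟨h, hh, hhE, hhd⟩ := move_off G (s.E : Set U) (E' \ s.E)
    ((s.E.image s.q).image (s.p⁻¹ : Equiv.Perm U)) hnew
  obtain ⟨k, hk, hkE, hkd⟩ := move_off G (s.E : Set U) (E' \ s.E)
    ((E'.image (s.p * h : Equiv.Perm U)).image (s.q⁻¹ : Equiv.Perm U)) hnew
  refine ⟨⟨E', s.p * h, s.q * k, ?_, ?_, G.mul_mem s.hp hh, G.mul_mem s.hq hk, ?_, ?_, ?_⟩,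
    ?_, ?_, ?_, ?_⟩
  · rw [hE', algCl_idem _ _ hfin]
  · intro a ha
    exact hsub a (Finset.mem_insert_of_mem (s.sub ha))
  · intro a ha
    rw [Equiv.Perm.mul_apply, hhE a (s.sub ha), s.pA a ha]
  · intro a ha
    rw [Equiv.Perm.mul_apply, hkE a (s.sub ha), s.qA a ha]
  · intro x hx y hy hxy
    by_cases hy' : y ∈ s.E
    · rw [Equiv.Perm.mul_apply, Equiv.Perm.mul_apply, hkE y hy'] at hxy
      by_cases hx' : x ∈ s.E
      · rw [hhE x hx'] at hxy
        rw [Equiv.Perm.mul_apply, hhE x hx']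
        exact s.disj x hx' y hy' hxy
      · refine absurd ?_ (hhd x (Finset.mem_sdiff.2 ⟨hx, hx'⟩))
        refine Finset.mem_image.2 ⟨s.q y, Finset.mem_image_of_mem _ hy', ?_⟩
        rw [← hxy]; simp
    · refine absurd ?_ (hkd y (Finset.mem_sdiff.2 ⟨hy, hy'⟩))
      refine Finset.mem_image.2 ⟨(s.p * h) x, Finset.mem_image_of_mem _ hx, ?_⟩
      rw [hxy]; simp
  · intro x hx
    exact hsub x (Finset.mem_insert_of_mem hx)
  · exact hsub u (Finset.mem_insert_self _ _)
  · intro x hx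
    show s.p (h x) = _
    rw [hhE x hx]
  · intro x hx
    show s.q (k x) = _
    rw [hkE x hx]

/-- Theorem: if `G` is algebraically finite then for every finite `F ⊆ U` there are two
copies for `G` whose intersection is the algebraic closure of `F`. -/
theorem exists_two_copies_inter_algCl {U : Type*} [Countable U] [Infinite U]
    (G : Subgroup (Equiv.Perm U)) (hG : AlgebraicallyFinite G) (F : Finset U) :
    ∃ C D : Set U, IsCopy G C ∧ IsCopy G D ∧ C ∩ D = algCl G ↑F := by
  classical
  obtain ⟨e, he⟩ := exists_surjective_nat U
  set A := algCl G (F : Set U) with hA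
  have hfin : A.Finite := hG F
  let s0 : Stage G A := ⟨hfin.toFinset, 1, 1, by rw [hfin.coe_toFinset]; exact algCl_idem _ _ hfin,
    by rw [hfin.coe_toFinset], G.one_mem, G.one_mem, fun _ _ => rfl, fun _ _ => rfl,
    fun x hx _ _ _ => hfin.mem_toFinset.1 hx⟩
  choose nxt hE hu hp hq using fun (s : Stage G A) (u : U) => s.step hG u
  let S : ℕ → Stage G A := fun n => Nat.rec s0 (fun n s => nxt s (e n)) n
  have hS : ∀ n, S (n + 1) = nxt (S n) (e n) := fun n => rfl
  have hmono : ∀ m n, m ≤ n → ∀ x ∈ (S m).E,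
      x ∈ (S n).E ∧ (S n).p x = (S m).p x ∧ (S n).q x = (S m).q x := by
    intro m n hmn x hx
    induction n, hmn using Nat.le_induction with
    | base => exact ⟨hx, rfl, rfl⟩
    | succ n _ ih =>
      obtain ⟨h1, h2, h3⟩ := ih
      rw [hS]
      exact ⟨hE _ _ h1, (hp _ _ _ h1).trans h2, (hq _ _ _ h1).trans h3⟩
  have hex : ∀ x, ∃ n, x ∈ (S n).E := by
    intro x
    obtain ⟨n, rfl⟩ := he x
    exact ⟨n + 1, by rw [hS]; exact hu _ _⟩
  choose k hk using hex
  have hsup : ∀ X : Finset U, ∃ n, ∀ x ∈ X, k x ≤ n := fun X =>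
    ⟨X.sup k, fun x hx => Finset.le_sup hx⟩
  refine ⟨_, _, ⟨fun x => (S (k x)).p x, ?_, rfl⟩, ⟨fun x => (S (k x)).q x, ?_, rfl⟩, ?_⟩
  · intro X
    obtain ⟨n, hn⟩ := hsup X
    exact ⟨(S n).p, (S n).hp, fun x hx => (hmono _ _ (hn x hx) x (hk x)).2.1.symm⟩
  · intro X
    obtain ⟨n, hn⟩ := hsup X
    exact ⟨(S n).q, (S n).hq, fun x hx => (hmono _ _ (hn x hx) x (hk x)).2.2.symm⟩
  · apply Set.Subset.antisymm
    · rintro z ⟨⟨x, rfl⟩, ⟨y, hy⟩⟩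
      obtain ⟨hx1, hx2, -⟩ := hmono _ (max (k x) (k y)) (le_max_left _ _) x (hk x)
      obtain ⟨hy1, -, hy2⟩ := hmono _ (max (k x) (k y)) (le_max_right _ _) y (hk y)
      have hy' : (S (k y)).q y = (S (k x)).p x := hy
      have := (S (max (k x) (k y))).disj x hx1 y hy1 (by rw [hx2, hy2, hy'])
      rw [hx2] at this
      exact this
    · intro a ha
      exact ⟨⟨a, (S (k a)).pA a ha⟩, ⟨a, (S (k a)).qA a ha⟩⟩
end

section
/- The set of copies for G is closed under unions of nonempty up-directed families: if (Cᵢ)_{i∈I} is a nonempty family of copies which is directed under inclusion (any two members are contained in a common member of the family), then ⋃_{i∈I} Cᵢ is a copy for G. -/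
/-- Any member of `G` mapping a finite set `F` into a copy `C` agrees on `F` with
an adherent function of range `C`. -/
lemma exists_adherent_extend {U : Type*} (G : Subgroup (Equiv.Perm U)) (C : Set U)
    (hC : IsCopy G C) (f₀ : U → U) (h₀ : IsAdherent G f₀) (F : Finset U)
    (hF : ∀ x ∈ F, f₀ x ∈ C) :
    ∃ f : U → U, IsAdherent G f ∧ Set.range f = C ∧ ∀ x ∈ F, f x = f₀ x := by
  classical
  obtain ⟨f, hf, rfl⟩ := hC
  obtain ⟨g, hg, hgF⟩ := h₀ F
  have : ∀ x, ∃ y, x ∈ F → f y = f₀ x := by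
    intro x
    by_cases hx : x ∈ F
    · obtain ⟨y, hy⟩ := hF x hx
      exact ⟨y, fun _ => hy⟩
    · exact ⟨x, fun h => absurd h hx⟩
  choose p hp using this
  obtain ⟨g₁, hg₁, hgE⟩ := hf (F.image p)
  refine ⟨fun x => f ((g₁⁻¹ * g) x), ?_, ?_, ?_⟩
  · intro E
    obtain ⟨k, hk, hkE⟩ := hf (E.image (g₁⁻¹ * g))
    refine ⟨k * (g₁⁻¹ * g), G.mul_mem hk (G.mul_mem (G.inv_mem hg₁) hg), fun x hx => ?_⟩
    exact hkE _ (Finset.mem_image_of_mem _ hx)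
  · exact (g₁⁻¹ * g).surjective.range_comp f
  · intro x hx
    have h1 : (g₁⁻¹ * g) x = p x := by
      rw [Equiv.Perm.mul_apply, Equiv.Perm.inv_eq_iff_eq, ← hgE _ (Finset.mem_image_of_mem _ hx),
        hp x hx, hgF x hx]
    simp only [h1, hp x hx]

/-- Theorem: the union of a nonempty, inclusion-directed family of copies for `G`
is a copy for `G`. -/
theorem isCopy_iUnion_of_directed {U : Type*} [Countable U] [Infinite U]
    (G : Subgroup (Equiv.Perm U)) {ι : Type*} [Nonempty ι] (C : ι → Set U)
    (hcopy : ∀ i, IsCopy G (C i))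
    (hdir : ∀ i j, ∃ k, C i ⊆ C k ∧ C j ⊆ C k) :
    IsCopy G (⋃ i, C i) := by
  classical
  let S := {s : (U → U) × Finset U × ι // IsAdherent G s.1 ∧ Set.range s.1 = C s.2.2}
  have step : ∀ (u : U) (s : S), ∃ t : S, s.1.2.1 ⊆ t.1.2.1 ∧ u ∈ t.1.2.1 ∧
      (∀ x ∈ s.1.2.1, t.1.1 x = s.1.1 x) ∧
      (u ∈ ⋃ i, C i → ∃ y ∈ t.1.2.1, t.1.1 y = u) := by
    rintro u ⟨⟨f, F, i⟩, hf, hr⟩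
    dsimp only at hf hr ⊢
    have hk : ∃ k, C i ⊆ C k ∧ (u ∈ ⋃ i, C i → u ∈ C k) := by
      by_cases hu : u ∈ ⋃ i, C i
      · obtain ⟨j, hj⟩ := Set.mem_iUnion.1 hu
        obtain ⟨k, h1, h2⟩ := hdir i j
        exact ⟨k, h1, fun _ => h2 hj⟩
      · exact ⟨i, subset_rfl, fun h => absurd h hu⟩
    obtain ⟨k, hik, huk⟩ := hk
    obtain ⟨f', hf', hr', hF'⟩ := exists_adherent_extend G (C k) (hcopy k) f hf F
      (fun x _ => hik (hr ▸ Set.mem_range_self x))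
    have hy : ∃ y, u ∈ ⋃ i, C i → f' y = u := by
      by_cases hu : u ∈ ⋃ i, C i
      · have := huk hu
        rw [← hr'] at this
        obtain ⟨y, hy⟩ := this
        exact ⟨y, fun _ => hy⟩
      · exact ⟨u, fun h => absurd h hu⟩
    obtain ⟨y, hy⟩ := hy
    refine ⟨⟨⟨f', insert u (insert y F), k⟩, hf', hr'⟩, ?_, ?_, hF', ?_⟩
    · intro x hx
      simp [hx]
    · simp
    · intro hu
      exact ⟨y, by simp, hy hu⟩
  choose next hsub hmem hagree hsurj using step
  obtain ⟨u, hu⟩ := exists_surjective_nat U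
  obtain ⟨i₀⟩ := ‹Nonempty ι›
  obtain ⟨f₀, hf₀, hr₀⟩ := hcopy i₀
  let s : ℕ → S := fun n => Nat.rec ⟨⟨f₀, ∅, i₀⟩, hf₀, hr₀⟩ (fun n t => next (u n) t) n
  have hs : ∀ n, s (n + 1) = next (u n) (s n) := fun n => rfl
  have key : ∀ m k, m ≤ k → (s m).1.2.1 ⊆ (s k).1.2.1 ∧
      ∀ x ∈ (s m).1.2.1, (s k).1.1 x = (s m).1.1 x := by
    intro m k hmk
    induction k, hmk using Nat.le_induction with
    | base => exact ⟨subset_rfl, fun _ _ => rfl⟩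
    | succ k _ ih =>
      rw [hs]
      exact ⟨ih.1.trans (hsub _ _), fun x hx => (hagree _ _ x (ih.1 hx)).trans (ih.2 x hx)⟩
  choose n hn using hu
  have hmn : ∀ x, x ∈ (s (n x + 1)).1.2.1 := by
    intro x
    have := hmem (u (n x)) (s (n x))
    rw [← hs] at this
    rwa [hn] at this
  have hlim : ∀ m x, x ∈ (s m).1.2.1 → (s (n x + 1)).1.1 x = (s m).1.1 x := by
    intro m x hx
    rw [← (key m _ (le_max_left m (n x + 1))).2 x hx,
      ← (key (n x + 1) _ (le_max_right m (n x + 1))).2 x (hmn x)]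
  refine ⟨fun x => (s (n x + 1)).1.1 x, ?_, ?_⟩
  · intro F
    obtain ⟨g, hg, hgF⟩ := (s (F.sup fun x => n x + 1)).2.1 F
    refine ⟨g, hg, fun x hx => ?_⟩
    rw [← hgF x hx]
    exact hlim _ x ((key _ _ (Finset.le_sup (f := fun x => n x + 1) hx)).1 (hmn x))
  · apply Set.Subset.antisymm
    · rintro _ ⟨x, rfl⟩
      refine Set.mem_iUnion.2 ⟨(s (n x + 1)).1.2.2, ?_⟩
      rw [← (s (n x + 1)).2.2]
      exact Set.mem_range_self x
    · intro v hv
      obtain ⟨y, hy, hyv⟩ := hsurj (u (n v)) (s (n v)) (by rwa [hn])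
      rw [← hs] at hy hyv
      exact ⟨y, (hlim (n v + 1) y hy).trans (hyv.trans (hn v))⟩
end

section
/- For every subset F of U and every copy C for G with F ∩ C = ∅ there exists a copy C' with C ⊆ C' and F ∩ C' = ∅ which is maximal with respect to inclusion among the copies disjoint from F. -/
/-- One-point extension property of a set `C`. -/
def ExtProp {U : Type*} (G : Subgroup (Equiv.Perm U)) (C : Set U) : Prop :=
  ∀ g ∈ G, ∀ A : Finset U, (∀ a ∈ A, g a ∈ C) → ∀ x : U,
    ∃ g' ∈ G, (∀ a ∈ A, g' a = g a) ∧ g' x ∈ C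

theorem IsCopy.extProp {U : Type*} {G : Subgroup (Equiv.Perm U)} {C : Set U}
    (hC : IsCopy G C) : ExtProp G C := by
  classical
  obtain ⟨f, hf, rfl⟩ := hC
  intro g hg A hA x
  choose! b hb using hA
  obtain ⟨h, hh, hhf⟩ := hf (A.image b)
  obtain ⟨h', hh', hhf'⟩ := hf (insert (h⁻¹ (g x)) (A.image b))
  refine ⟨h' * h⁻¹ * g, G.mul_mem (G.mul_mem hh' (G.inv_mem hh)) hg, ?_, ?_⟩
  · intro a ha
    have hm : b a ∈ A.image b := Finset.mem_image_of_mem b ha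
    have h1 : h⁻¹ (g a) = b a := by
      rw [Equiv.Perm.inv_eq_iff_eq, ← hb a ha, hhf _ hm]
    simp only [Equiv.Perm.mul_apply]
    rw [h1, ← hhf' _ (Finset.mem_insert_of_mem hm), hb a ha]
  · simp only [Equiv.Perm.mul_apply]
    exact ⟨_, hhf' _ (Finset.mem_insert_self _ _)⟩

theorem ExtProp.isCopy {U : Type*} [Countable U] [Infinite U]
    {G : Subgroup (Equiv.Perm U)} {C : Set U}
    (hC : ExtProp G C) : IsCopy G C := by
  classical
  obtain ⟨u, hu⟩ := exists_surjective_nat U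
  let P := {p : Equiv.Perm U × Finset U // p.1 ∈ G ∧ ∀ a ∈ p.2, p.1 a ∈ C}
  have step : ∀ (p : P) (x : U), ∃ q : P, p.1.2 ⊆ q.1.2 ∧ (∀ a ∈ p.1.2, q.1.1 a = p.1.1 a) ∧
      x ∈ q.1.2 ∧ (x ∈ C → ∃ a ∈ q.1.2, q.1.1 a = x) := by
    rintro ⟨⟨g, A⟩, hg, hA⟩ x
    dsimp only at hg hA
    obtain ⟨A1, hA1, hA1C, hx⟩ : ∃ A1 : Finset U, A ⊆ A1 ∧ (∀ a ∈ A1, g a ∈ C) ∧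
        (x ∈ C → ∃ a ∈ A1, g a = x) := by
      by_cases hx : x ∈ C
      · refine ⟨insert (g⁻¹ x) A, Finset.subset_insert _ _, ?_, fun _ =>
          ⟨g⁻¹ x, Finset.mem_insert_self _ _, by simp⟩⟩
        intro a ha
        rcases Finset.mem_insert.1 ha with rfl | ha
        · simpa using hx
        · exact hA a ha
      · exact ⟨A, subset_rfl, hA, fun h => absurd h hx⟩
    obtain ⟨g', hg', hgg, hgx⟩ := hC g hg A1 hA1C x
    refine ⟨⟨(g', insert x A1), hg', ?_⟩, ?_, ?_, ?_, ?_⟩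
    · intro a ha
      rcases Finset.mem_insert.1 ha with rfl | ha
      · exact hgx
      · change g' a ∈ C
        rw [hgg a ha]; exact hA1C a ha
    · exact hA1.trans (Finset.subset_insert _ _)
    · exact fun a ha => hgg a (hA1 ha)
    · exact Finset.mem_insert_self _ _
    · intro h
      obtain ⟨a, ha, hax⟩ := hx h
      exact ⟨a, Finset.mem_insert_of_mem ha, (hgg a ha).trans hax⟩
  choose nxt h1 h2 h3 h4 using step
  let p0 : P := ⟨(1, ∅), G.one_mem, by simp⟩
  let s : ℕ → P := fun n => Nat.rec p0 (fun k p => nxt p (u k)) n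
  have hs : ∀ n, s (n + 1) = nxt (s n) (u n) := fun n => rfl
  have hmono : Monotone (fun n => (s n).1.2) :=
    monotone_nat_of_le_succ (fun n => h1 (s n) (u n))
  have hag : ∀ m n, m ≤ n → ∀ a ∈ (s m).1.2, (s n).1.1 a = (s m).1.1 a := by
    intro m n hmn
    induction n, hmn using Nat.le_induction with
    | base => intro a _; rfl
    | succ n hmn ih =>
      intro a ha
      rw [hs, h2 (s n) (u n) a (hmono hmn ha), ih a ha]
  choose v hv using hu
  have hmem : ∀ x, x ∈ (s (v x + 1)).1.2 := fun x => by
    have := h3 (s (v x)) (u (v x))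
    rw [← hs] at this
    rwa [hv] at this
  let f : U → U := fun x => (s (v x + 1)).1.1 x
  have hf : ∀ n, ∀ a ∈ (s n).1.2, f a = (s n).1.1 a := by
    intro n a ha
    rcases le_total n (v a + 1) with h | h
    · exact hag _ _ h a ha
    · exact (hag _ _ h a (hmem a)).symm
  refine ⟨f, ?_, ?_⟩
  · intro A
    refine ⟨(s (A.sup (fun x => v x + 1))).1.1, (s _).2.1, fun x hx => hf _ x ?_⟩
    exact hmono (Finset.le_sup (f := fun x => v x + 1) hx) (hmem x)
  · apply Set.Subset.antisymm
    · rintro _ ⟨x, rfl⟩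
      exact (s (v x + 1)).2.2 x (hmem x)
    · intro c hc
      obtain ⟨a, ha, hac⟩ := h4 (s (v c)) (u (v c)) (by rwa [hv])
      rw [← hs] at ha hac
      exact ⟨a, (hf (v c + 1) a ha).trans (hac.trans (hv c))⟩

/-- Theorem: for every set `F` and copy `C` disjoint from `F` there is a copy `C' ⊇ C`
disjoint from `F` which is maximal (under inclusion) among copies disjoint from `F`. -/
theorem exists_maximal_copy_disjoint {U : Type*} [Countable U] [Infinite U]
    (G : Subgroup (Equiv.Perm U)) (F : Set U) (C : Set U)
    (hC : IsCopy G C) (hFC : F ∩ C = ∅) :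
    ∃ C' : Set U, IsCopy G C' ∧ C ⊆ C' ∧ F ∩ C' = ∅ ∧
      ∀ D : Set U, IsCopy G D → F ∩ D = ∅ → C' ⊆ D → D = C' := by
  obtain ⟨M, hCM, hM⟩ := zorn_subset_nonempty {D : Set U | ExtProp G D ∧ F ∩ D = ∅} (by
    intro c hc hchain hne
    refine ⟨⋃₀ c, ⟨?_, ?_⟩, fun s hs => Set.subset_sUnion_of_mem hs⟩
    · intro g hg A hA x
      have hsub : ((fun a => g a) '' (A : Set U)) ⊆ ⋃₀ c := by
        rintro _ ⟨a, ha, rfl⟩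
        exact hA a ha
      obtain ⟨D, hD, hAD⟩ := DirectedOn.exists_mem_subset_of_finite_of_subset_sUnion hne
        hchain.directedOn (A.finite_toSet.image _) hsub
      obtain ⟨g', hg', h1, h2⟩ := (hc hD).1 g hg A (fun a ha => hAD ⟨a, ha, rfl⟩) x
      exact ⟨g', hg', h1, D, hD, h2⟩
    · rw [Set.eq_empty_iff_forall_notMem]
      rintro x ⟨hxF, D, hD, hxD⟩
      have := (hc hD).2
      rw [Set.eq_empty_iff_forall_notMem] at this
      exact this x ⟨hxF, hxD⟩) C ⟨hC.extProp, hFC⟩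
  refine ⟨M, hM.prop.1.isCopy, hCM, hM.prop.2, fun D hD hFD hMD => ?_⟩
  exact Set.Subset.antisymm (hM.le_of_ge ⟨hD.extProp, hFD⟩ hMD) hMD
end

section
/- For every copy V for G with V ≠ U and every finite subset F of V there exists a copy W for G with F ⊆ W and W strictly contained in V. -/
/-- Theorem: for every copy `V ≠ U` and finite `F ⊆ V` there is a copy `W` with
`F ⊆ W ⊊ V`. -/
theorem exists_strictly_smaller_copy {U : Type*} [Countable U] [Infinite U]
    (G : Subgroup (Equiv.Perm U)) (V : Set U) (hV : IsCopy G V) (hVne : V ≠ Set.univ)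
    (F : Finset U) (hF : ↑F ⊆ V) :
    ∃ W : Set U, IsCopy G W ∧ ↑F ⊆ W ∧ W ⊂ V := by
  classical
  obtain ⟨f, hf, rfl⟩ := hV
  have hinj : Function.Injective f := by
    intro x y hxy
    obtain ⟨g, -, hg⟩ := hf {x, y}
    have hx := hg x (by simp)
    have hy := hg y (by simp)
    exact g.injective (by rw [← hx, ← hy, hxy])
  choose! p hp using fun y (hy : y ∈ F) => hF hy
  obtain ⟨g, hgG, hg⟩ := hf (F.image p)
  refine ⟨Set.range (fun x => f (g.symm (f x))), ⟨_, ?_, rfl⟩, ?_, ?_⟩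
  · intro E
    obtain ⟨a, ha, hfa⟩ := hf E
    obtain ⟨b, hb, hfb⟩ := hf (E.image (fun x => g.symm (f x)))
    refine ⟨b * (g⁻¹ * a), G.mul_mem hb (G.mul_mem (G.inv_mem hgG) ha), fun x hx => ?_⟩
    have h1 : f (g.symm (f x)) = b (g.symm (f x)) := hfb _ (Finset.mem_image_of_mem _ hx)
    have h2 : (b * (g⁻¹ * a)) x = b (g.symm (a x)) := rfl
    rw [h2, ← hfa x hx]
    exact h1
  · intro y hy
    refine ⟨p y, ?_⟩
    have h1 := hg (p y) (Finset.mem_image_of_mem _ hy)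
    show f (g.symm (f (p y))) = y
    rw [h1, Equiv.symm_apply_apply]
    exact hp y hy
  · refine ⟨?_, fun hsub => hVne ?_⟩
    · rintro _ ⟨x, rfl⟩
      exact ⟨_, rfl⟩
    · refine Set.eq_univ_of_forall fun z => ?_
      obtain ⟨x, hx⟩ := hsub ⟨g.symm z, rfl⟩
      exact ⟨x, g.symm.injective (hinj hx)⟩
end

section
/- The following are equivalent: (i) U is the only copy for G; (ii) every function adherent to G is a bijection of U onto U; (iii) for every finite F ⊆ U, every function adherent to the pointwise stabilizer G⟨F⟩ is a bijection of U onto U; (iv) for some finite F ⊆ U, every function adherent to G⟨F⟩ is a bijection of U onto U. -/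
/-- `f` is adherent to a set `X` of functions `U → U`. -/
def AdhTo {U : Type*} (X : Set (U → U)) (f : U → U) : Prop :=
  ∀ F : Finset U, ∃ g ∈ X, ∀ x ∈ F, f x = g x

/-- Theorem: the following are equivalent:
(i) `U` is the only copy for `G`;
(ii) every function adherent to `G` is a bijection;
(iii) for every finite `F`, every function adherent to the pointwise stabilizer
of `F` is a bijection;
(iv) for some finite `F`, every function adherent to the pointwise stabilizer
of `F` is a bijection. -/
theorem only_copy_tfae {U : Type*} [Countable U] [Infinite U]
    (G : Subgroup (Equiv.Perm U)) :
    List.TFAE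
      [∀ C : Set U, IsCopy G C → C = Set.univ,
       ∀ f : U → U, IsAdherent G f → Function.Bijective f,
       ∀ F : Finset U, ∀ f : U → U,
         AdhTo {h : U → U | ∃ g ∈ G, (∀ x ∈ F, g x = x) ∧ ⇑g = h} f →
           Function.Bijective f,
       ∃ F : Finset U, ∀ f : U → U,
         AdhTo {h : U → U | ∃ g ∈ G, (∀ x ∈ F, g x = x) ∧ ⇑g = h} f →
           Function.Bijective f] := by
  tfae_have 1 → 2 := by
    intro h f hf
    refine ⟨?_, Set.range_eq_univ.mp (h _ ⟨f, hf, rfl⟩)⟩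
    intro x y hxy
    classical
    obtain ⟨g, -, hg⟩ := hf {x, y}
    have hx := hg x (by simp)
    have hy := hg y (by simp)
    exact g.injective (by rw [← hx, ← hy, hxy])
  tfae_have 2 → 1 := by
    rintro h C ⟨f, hf, rfl⟩
    exact Set.range_eq_univ.mpr (h f hf).2
  tfae_have 2 → 3 := by
    intro h F f hf
    refine h f fun E => ?_
    obtain ⟨_, ⟨g, hgG, -, rfl⟩, hg⟩ := hf E
    exact ⟨g, hgG, hg⟩
  tfae_have 3 → 4 := fun h => ⟨∅, h ∅⟩
  tfae_have 4 → 2 := by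
    rintro ⟨F, h⟩ f hf
    classical
    obtain ⟨g, hgG, hg⟩ := hf F
    have key : Function.Bijective (⇑(g⁻¹) ∘ f) := by
      refine h _ fun E => ?_
      obtain ⟨k, hkG, hk⟩ := hf (F ∪ E)
      refine ⟨⇑(g⁻¹ * k), ⟨g⁻¹ * k, G.mul_mem (G.inv_mem hgG) hkG, ?_, rfl⟩, ?_⟩
      · intro x hx
        rw [Equiv.Perm.mul_apply, ← hk x (Finset.mem_union_left _ hx), hg x hx]
        simp
      · intro x hx
        rw [Equiv.Perm.mul_apply, ← hk x (Finset.mem_union_right _ hx)]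
        rfl
    exact (Function.Bijective.of_comp_iff' (g⁻¹).bijective f).mp key
  tfae_finish
end

section
/- If F is a finite subset of a copy C for G, then there exists a function f adherent to G with f[U] = C and f(a) = a for all a ∈ F. -/
/-- Theorem: if `F` is a finite subset of a copy `C` for `G`, then there is a function
`f` adherent to `G` with range `C` fixing `F` pointwise. -/
theorem exists_adherent_range_fixing {U : Type*} [Countable U] [Infinite U]
    (G : Subgroup (Equiv.Perm U)) (C : Set U) (hC : IsCopy G C)
    (F : Finset U) (hF : ↑F ⊆ C) :
    ∃ f : U → U, IsAdherent G f ∧ Set.range f = C ∧ ∀ a ∈ F, f a = a := by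
  classical
  obtain ⟨h, hh, rfl⟩ := hC
  choose! p hp using fun a (ha : a ∈ F) => hF ha
  obtain ⟨g, hg, hgp⟩ := hh (F.image p)
  refine ⟨h ∘ g.symm, ?_, g.symm.surjective.range_comp h, ?_⟩
  · intro E
    obtain ⟨k, hk, hkE⟩ := hh (E.image g.symm)
    exact ⟨k * g⁻¹, G.mul_mem hk (G.inv_mem hg),
      fun x hx => hkE _ (Finset.mem_image_of_mem _ hx)⟩
  · intro a ha
    have h1 : g (p a) = a := by
      rw [← hgp _ (Finset.mem_image_of_mem _ ha), hp a ha]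
    have h2 : g.symm a = p a := by rw [Equiv.symm_apply_eq, h1]
    simp only [Function.comp_apply, h2, hp a ha]
end

section
/- If f and g are functions adherent to G with f[U] ⊆ g[U], then there exists a function h adherent to G with g ∘ h = f (i.e. g⁻¹ ∘ f is adherent to G). If moreover f[U] = g[U], then this h is a bijection of U onto U. -/
/-- Theorem: if `f, g` are adherent to `G` with `range f ⊆ range g`, then there is `h`
adherent to `G` with `g ∘ h = f`; if moreover `range f = range g`, this `h` is a
bijection of `U` onto `U`. -/
theorem exists_adherent_factor {U : Type*} [Countable U] [Infinite U]
    (G : Subgroup (Equiv.Perm U)) (f g : U → U)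
    (hf : IsAdherent G f) (hg : IsAdherent G g)
    (hsub : Set.range f ⊆ Set.range g) :
    ∃ h : U → U, IsAdherent G h ∧ g ∘ h = f ∧
      (Set.range f = Set.range g → Function.Bijective h) := by
  classical
  have inj : ∀ k : U → U, IsAdherent G k → Function.Injective k := by
    intro k hk x y hxy
    obtain ⟨p, -, hp⟩ := hk {x, y}
    have hx := hp x (by simp)
    have hy := hp y (by simp)
    exact p.injective (by rw [← hx, ← hy, hxy])
  have hex : ∀ x, ∃ y, g y = f x := fun x => hsub ⟨x, rfl⟩
  choose h hh using hex
  refine ⟨h, ?_, funext hh, ?_⟩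
  · intro F
    obtain ⟨p, hpG, hp⟩ := hf F
    obtain ⟨q, hqG, hq⟩ := hg (F.image h)
    refine ⟨q⁻¹ * p, G.mul_mem (G.inv_mem hqG) hpG, fun x hx => ?_⟩
    have h1 := hq (h x) (Finset.mem_image_of_mem h hx)
    rw [Equiv.Perm.mul_apply, ← hp x hx, ← hh x, h1]
    exact (q.symm_apply_apply (h x)).symm
  · intro heq
    refine ⟨fun x y hxy => inj f hf (by rw [← hh x, ← hh y, hxy]), fun y => ?_⟩
    obtain ⟨x, hx⟩ : g y ∈ Set.range f := heq ▸ ⟨y, rfl⟩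
    exact ⟨x, inj g hg (by rw [hh x, hx])⟩
end

section
/- Assume that for every finite subset F of U every orbit of the pointwise stabilizer G⟨F⟩ on U \ F is infinite. Then there exists a subset A of U with infinite complement such that every subset A' of U containing A is a copy for G. In particular, there is an order embedding of the power set of ℕ ordered by inclusion into the set of copies for G ordered by inclusion. -/
theorem exists_bernstein {U : Type*} [Countable U] [Infinite U] {ι : Type*} [Countable ι]
    [Nonempty ι] (S : ι → Set U) (hS : ∀ i, (S i).Infinite) :
    ∃ A : Set U, Set.Infinite Aᶜ ∧ ∀ i, ∃ y ∈ S i, y ∈ A := by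
  obtain ⟨en, hen⟩ := exists_surjective_nat ι
  obtain ⟨e⟩ : Nonempty (U ≃ ℕ) := nonempty_equiv_of_countable
  have key : ∀ n m : ℕ, ∃ y, y ∈ e '' (S (en (n / 2))) ∧ m < y := fun n m => by
    obtain ⟨y, hy, hlt⟩ := ((hS (en (n / 2))).image e.injective.injOn).exists_gt m
    exact ⟨y, hy, hlt⟩
  choose f hf hlt using key
  let p : ℕ → ℕ := fun n => Nat.rec (f 0 0) (fun n q => f (n + 1) q) n
  have hp : StrictMono p := strictMono_nat_of_lt_succ fun n => hlt (n + 1) (p n)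
  have hpm : ∀ n, p n ∈ e '' (S (en (n / 2))) := by
    intro n
    cases n with
    | zero => exact hf 0 0
    | succ n => exact hf (n + 1) (p n)
  clear_value p
  refine ⟨Set.range fun i => e.symm (p (2 * i)), ?_, ?_⟩
  · refine Set.Infinite.mono (s := Set.range fun i => e.symm (p (2 * i + 1))) ?_ ?_
    · rintro _ ⟨i, rfl⟩ ⟨j, hj⟩
      have h1 : p (2 * j) = p (2 * i + 1) := e.symm.injective hj
      have := hp.injective h1
      omega
    · apply Set.infinite_range_of_injective
      intro i j hij
      have h1 : p (2 * i + 1) = p (2 * j + 1) := e.symm.injective hij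
      have := hp.injective h1
      omega
  · intro i
    obtain ⟨n, rfl⟩ := hen i
    obtain ⟨y, hy, hye⟩ := hpm (2 * n)
    rw [Nat.mul_div_cancel_left n (by norm_num)] at hy
    exact ⟨y, hy, n, by simp [← hye]⟩

/-- Finite approximations to an adherent map into `C`. -/
structure Approx {U : Type*} (G : Subgroup (Equiv.Perm U)) (C : Set U) where
  dom : Finset U
  perm : Equiv.Perm U
  mem : perm ∈ G
  maps : ∀ x ∈ dom, perm x ∈ C

instance Approx.instPreorder {U : Type*} (G : Subgroup (Equiv.Perm U)) (C : Set U) :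
    Preorder (Approx G C) where
  le p q := p.dom ⊆ q.dom ∧ ∀ x ∈ p.dom, p.perm x = q.perm x
  le_refl p := ⟨Finset.Subset.refl _, fun _ _ => rfl⟩
  le_trans p q r h₁ h₂ := ⟨h₁.1.trans h₂.1, fun x hx => (h₁.2 x hx).trans (h₂.2 x (h₁.1 hx))⟩

theorem isCopy_of_meets {U : Type*} [Countable U]
    (G : Subgroup (Equiv.Perm U)) (C : Set U)
    (hC : ∀ F : Finset U, ∀ x : U, x ∉ F →
      ∃ y ∈ {y | ∃ g ∈ G, (∀ a ∈ F, g a = a) ∧ g x = y}, y ∈ C) : IsCopy G C := by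
  classical
  have forth : ∀ (x : U) (p : Approx G C), ∃ q : Approx G C, x ∈ q.dom ∧ p ≤ q := by
    intro x p
    by_cases hx : x ∈ p.dom
    · exact ⟨p, hx, le_refl p⟩
    · obtain ⟨y, ⟨k, hk, hfix, hky⟩, hyC⟩ := hC (p.dom.image p.perm) (p.perm x) (by simpa using hx)
      have hag : ∀ z ∈ p.dom, k (p.perm z) = p.perm z := fun z hz =>
        hfix _ (Finset.mem_image_of_mem _ hz)
      refine ⟨⟨insert x p.dom, k * p.perm, G.mul_mem hk p.mem, ?_⟩, Finset.mem_insert_self _ _,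
        Finset.subset_insert _ _, fun z hz => (hag z hz).symm⟩
      intro z hz
      rcases Finset.mem_insert.1 hz with rfl | hz
      · rw [Equiv.Perm.mul_apply, hky]; exact hyC
      · rw [Equiv.Perm.mul_apply, hag z hz]; exact p.maps z hz
  have back : ∀ (c : C) (p : Approx G C),
      ∃ q : Approx G C, (∃ x ∈ q.dom, q.perm x = c) ∧ p ≤ q := by
    intro c p
    refine ⟨⟨insert (p.perm.symm c) p.dom, p.perm, p.mem, ?_⟩,
      ⟨p.perm.symm c, Finset.mem_insert_self _ _, by simp⟩,
        Finset.subset_insert _ _, fun z hz => rfl⟩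
    intro z hz
    rcases Finset.mem_insert.1 hz with rfl | hz
    · simp
    · exact p.maps z hz
  let D : U ⊕ C → Order.Cofinal (Approx G C) := fun i => match i with
    | Sum.inl x => ⟨{q | x ∈ q.dom}, fun p => forth x p⟩
    | Sum.inr c => ⟨{q | ∃ x ∈ q.dom, q.perm x = c}, fun p => back c p⟩
  let p0 : Approx G C := ⟨∅, 1, G.one_mem, by simp⟩
  letI : Encodable (U ⊕ C) := Encodable.ofCountable _
  let I := Order.idealOfCofinals p0 D
  have hI : ∀ i, ∃ q, q ∈ D i ∧ q ∈ I := Order.cofinal_meets_idealOfCofinals p0 D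
  have h1 : ∀ x, ∃ q : Approx G C, x ∈ q.dom ∧ q ∈ I := fun x => hI (Sum.inl x)
  have h2 : ∀ c : C, ∃ q : Approx G C, (∃ x ∈ q.dom, q.perm x = c) ∧ q ∈ I :=
    fun c => hI (Sum.inr c)
  choose q hq hqI using h1
  have hf : ∀ r ∈ I, ∀ x ∈ r.dom, (q x).perm x = r.perm x := by
    intro r hr x hx
    obtain ⟨s, -, hs1, hs2⟩ := I.directed (q x) (hqI x) r hr
    exact (hs1.2 x (hq x)).trans (hs2.2 x hx).symm
  refine ⟨fun x => (q x).perm x, ?_, ?_⟩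
  · intro F
    obtain ⟨r, hr, hF⟩ : ∃ r ∈ I, F ⊆ r.dom := by
      induction F using Finset.induction_on with
      | empty => exact ⟨p0, Order.mem_idealOfCofinals p0 D, by simp⟩
      | insert a F _ ih =>
        obtain ⟨r, hr, hF⟩ := ih
        obtain ⟨s, hs, hs1, hs2⟩ := I.directed (q a) (hqI a) r hr
        exact ⟨s, hs, Finset.insert_subset (hs1.1 (hq a)) (hF.trans hs2.1)⟩
    exact ⟨r.perm, r.mem, fun x hx => hf r hr x (hF hx)⟩
  · ext c
    constructor
    · rintro ⟨x, rfl⟩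
      exact (q x).maps x (hq x)
    · intro hc
      obtain ⟨r, ⟨x, hx, hxc⟩, hr⟩ := h2 ⟨c, hc⟩
      exact ⟨x, (hf r hr x hx).trans hxc⟩


/-- Theorem: if for every finite `F` every orbit of the pointwise stabilizer of `F` on
`U \ F` is infinite, then there is a co-infinite set `A` all of whose supersets are
copies for `G`; in particular the powerset of `ℕ` order-embeds into the poset of
copies for `G`. -/
theorem bernstein_copies {U : Type*} [Countable U] [Infinite U]
    (G : Subgroup (Equiv.Perm U))
    (h : ∀ F : Finset U, ∀ x : U, x ∉ F →
      Set.Infinite {y | ∃ g ∈ G, (∀ a ∈ F, g a = a) ∧ g x = y}) :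
    (∃ A : Set U, Set.Infinite Aᶜ ∧ ∀ A' : Set U, A ⊆ A' → IsCopy G A') ∧
      Nonempty (Set ℕ ↪o {C : Set U // IsCopy G C}) := by
  have main : ∃ A : Set U, Set.Infinite Aᶜ ∧ ∀ A' : Set U, A ⊆ A' → IsCopy G A' := by
    obtain ⟨u⟩ : Nonempty U := inferInstance
    haveI : Nonempty {p : Finset U × U // p.2 ∉ p.1} := ⟨⟨(∅, u), by simp⟩⟩
    obtain ⟨A, hA, hm⟩ := exists_bernstein
      (fun p : {p : Finset U × U // p.2 ∉ p.1} =>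
        {y | ∃ g ∈ G, (∀ a ∈ p.1.1, g a = a) ∧ g p.1.2 = y})
      (fun p => h p.1.1 p.1.2 p.2)
    refine ⟨A, hA, fun A' hAA' => isCopy_of_meets G A' fun F x hx => ?_⟩
    obtain ⟨y, hy, hyA⟩ := hm ⟨(F, x), hx⟩
    exact ⟨y, hy, hAA' hyA⟩
  refine ⟨main, ?_⟩
  obtain ⟨A, hA, hc⟩ := main
  let e : ℕ ↪ ↥Aᶜ := hA.natEmbedding
  refine ⟨OrderEmbedding.ofMapLEIff
    (fun S => ⟨A ∪ (fun n => (e n : U)) '' S, hc _ Set.subset_union_left⟩) ?_⟩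
  intro S T
  constructor
  · intro hST n hn
    have hmem : (e n : U) ∈ A ∪ (fun n => (e n : U)) '' T := hST (Or.inr ⟨n, hn, rfl⟩)
    rcases hmem with hmA | ⟨m, hm, hmn⟩
    · exact absurd hmA (e n).2
    · have := e.injective (Subtype.ext hmn)
      exact this ▸ hm
  · intro hST
    exact Set.union_subset_union_right A (Set.image_mono hST)
end

section
/- Let F be a finite subset of U and x ∈ U, and suppose the typeset G⟨F ▸ x⟩ (the orbit of x under the pointwise stabilizer G⟨F⟩) is finite. Then (1) for every function f adherent to G, the image f[G⟨F ▸ x⟩] equals the orbit of f(x) under the pointwise stabilizer G⟨f[F]⟩; and (2) G⟨F ▸ x⟩ is contained in every copy C for G with F ⊆ C. -/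
/-- Theorem: if the typeset of `⟨F ▸ x⟩` (the orbit of `x` under the pointwise
stabilizer of `F`) is finite, then (1) for every `f` adherent to `G` its image under `f`
is the orbit of `f x` under the pointwise stabilizer of `f[F]`, and (2) it is contained
in every copy for `G` containing `F`. -/
theorem finite_typeset_properties {U : Type*} [Countable U] [Infinite U]
    (G : Subgroup (Equiv.Perm U)) (F : Finset U) (x : U)
    (hfin : Set.Finite {y | ∃ g ∈ G, (∀ a ∈ F, g a = a) ∧ g x = y}) :
    (∀ f : U → U, IsAdherent G f →
      f '' {y | ∃ g ∈ G, (∀ a ∈ F, g a = a) ∧ g x = y} =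
        {y | ∃ g ∈ G, (∀ a ∈ f '' (↑F : Set U), g a = a) ∧ g (f x) = y}) ∧
    (∀ C : Set U, IsCopy G C → ↑F ⊆ C →
      {y | ∃ g ∈ G, (∀ a ∈ F, g a = a) ∧ g x = y} ⊆ C) := by
  classical
  refine ⟨?_, ?_⟩
  · intro f hf
    obtain ⟨g, hg, hgf⟩ := hf (insert x (F ∪ hfin.toFinset))
    have hx : f x = g x := hgf x (by simp)
    have hF : ∀ a ∈ F, f a = g a := fun a ha => hgf a (by simp [ha])
    have hO : ∀ y, (∃ k ∈ G, (∀ a ∈ F, k a = a) ∧ k x = y) → f y = g y := fun y hy =>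
      hgf y (Finset.mem_insert_of_mem (Finset.mem_union_right _ (hfin.mem_toFinset.2 hy)))
    ext z
    constructor
    · rintro ⟨y, ⟨k, hk, hkF, rfl⟩, rfl⟩
      refine ⟨g * k * g⁻¹, G.mul_mem (G.mul_mem hg hk) (G.inv_mem hg), ?_, ?_⟩
      · rintro _ ⟨a, ha, rfl⟩
        have ha' : a ∈ F := ha
        rw [hF a ha']
        simp [hkF a ha']
      · rw [hO _ ⟨k, hk, hkF, rfl⟩, hx]
        simp
    · rintro ⟨k, hk, hkF, rfl⟩
      have hm : ∃ k' ∈ G, (∀ a ∈ F, k' a = a) ∧ k' x = (g⁻¹ * k * g) x := by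
        refine ⟨g⁻¹ * k * g, G.mul_mem (G.mul_mem (G.inv_mem hg) hk) hg, ?_, rfl⟩
        intro a ha
        have h := hkF (f a) ⟨a, ha, rfl⟩
        rw [hF a ha] at h
        simp [h]
      refine ⟨(g⁻¹ * k * g) x, hm, ?_⟩
      rw [hO _ hm, hx]
      simp
  · rintro C ⟨f, hf, rfl⟩ hFC y ⟨k, hk, hkF, rfl⟩
    choose! s hs using fun a (ha : a ∈ F) => hFC ha
    obtain ⟨g, hg, hgf⟩ := hf (F.image s)
    have hgs : ∀ a ∈ F, g (s a) = a := fun a ha => by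
      rw [← hgf _ (Finset.mem_image_of_mem s ha), hs a ha]
    obtain ⟨h, hh, hhf⟩ := hf (F.image s ∪ hfin.toFinset.image (g⁻¹ : Equiv.Perm U))
    have hhs : ∀ a ∈ F, h⁻¹ a = s a := fun a ha => by
      rw [Equiv.Perm.inv_eq_iff_eq,
        ← hhf _ (Finset.mem_union_left _ (Finset.mem_image_of_mem s ha)), hs a ha]
    refine ⟨h⁻¹ (k x), ?_⟩
    rw [hhf]
    · simp
    · refine Finset.mem_union_right _ (Finset.mem_image.2 ⟨g (h⁻¹ (k x)), ?_, by simp⟩)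
      refine hfin.mem_toFinset.2
        ⟨g * h⁻¹ * k, G.mul_mem (G.mul_mem hg (G.inv_mem hh)) hk, ?_, rfl⟩
      intro a ha
      simp only [Equiv.Perm.mul_apply]
      rw [hkF a ha, hhs a ha, hgs a ha]
end

section
/- Let 𝓘 be the family of all sets that are intersections of nonempty families of copies for G, ordered by inclusion. Then an element C ∈ 𝓘 is completely meet-irreducible in 𝓘 (i.e. there exists C⁺ ∈ 𝓘 with C⁺ ⊋ C such that every Y ∈ 𝓘 with Y ⊋ C satisfies Y ⊇ C⁺) if and only if C is itself a copy for G and there exists x ∈ U \ C such that C is maximal with respect to inclusion among the copies for G not containing x. -/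
/-- The family of all intersections of nonempty families of copies for `G`. -/
def InterCopies {U : Type*} (G : Subgroup (Equiv.Perm U)) : Set (Set U) :=
  {S | ∃ 𝒞 : Set (Set U), 𝒞.Nonempty ∧ (∀ D ∈ 𝒞, IsCopy G D) ∧ S = ⋂₀ 𝒞}

/-- Theorem: an element `C` of the family of intersections of copies is completely
meet-irreducible in that family iff `C` is itself a copy and there is `x ∉ C` such that
`C` is maximal among copies not containing `x`. -/
theorem completely_meet_irreducible_iff {U : Type*} [Countable U] [Infinite U]
    (G : Subgroup (Equiv.Perm U)) (C : Set U) (hC : C ∈ InterCopies G) :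
    (∃ Cp ∈ InterCopies G, C ⊂ Cp ∧ ∀ Y ∈ InterCopies G, C ⊂ Y → Cp ⊆ Y) ↔
      (IsCopy G C ∧ ∃ x ∉ C,
        ∀ D : Set U, IsCopy G D → x ∉ D → C ⊆ D → D = C) := by
  constructor
  · rintro ⟨Cp, -, hlt, hmin⟩
    have key : ∀ D, IsCopy G D → C ⊆ D → D ≠ C → Cp ⊆ D := by
      intro D hD hCD hne
      refine hmin D ⟨{D}, ⟨D, rfl⟩, ?_, by simp⟩ (LE.le.ssubset_of_ne hCD hne.symm)
      rintro E rfl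
      exact hD
    obtain ⟨x, hx, hxC⟩ := Set.exists_of_ssubset hlt
    refine ⟨?_, x, hxC, ?_⟩
    · by_contra hn
      obtain ⟨𝒞, -, hcop, hEq⟩ := hC
      apply hxC
      rw [hEq]
      intro D hD
      refine key D (hcop D hD) ?_ ?_ hx
      · rw [hEq]
        exact Set.sInter_subset_of_mem hD
      · rintro rfl
        exact hn (hcop _ hD)
    · intro D hD hxD hCD
      by_contra hne
      exact hxD (key D hD hCD hne hx)
  · rintro ⟨-, x, hxC, hmax⟩
    have huniv : IsCopy G Set.univ :=
      ⟨id, fun F => ⟨1, G.one_mem, fun y _ => rfl⟩, Set.range_id⟩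
    refine ⟨⋂₀ {D | IsCopy G D ∧ C ⊂ D}, ⟨{D | IsCopy G D ∧ C ⊂ D}, ⟨Set.univ, huniv, ?_⟩, fun D hD => hD.1, rfl⟩, ?_, ?_⟩
    · exact ⟨Set.subset_univ _, fun h => hxC (h (Set.mem_univ x))⟩
    · refine ⟨fun y hy D hD => hD.2.1 hy, fun h => hxC (h ?_)⟩
      intro D hD
      by_contra hxD
      exact hD.2.ne (hmax D hD.1 hxD hD.2.1).symm
    · rintro Y ⟨𝒟, -, hcop, rfl⟩ hlt y hy D hD
      exact hy D ⟨hcop D hD, hlt.trans_subset (Set.sInter_subset_of_mem hD)⟩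
end
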